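/- arXiv:1704.07677 — 2 statements merged into one kernel-verified Lean document; each statement's English description precedes it below -/
import Mathlib

section
/- For every set Γ of propositional formulas and every propositional formula A: Γ ⊢_FPL A if and only if Γ^b ⊢_GL A^b. -/
/-! ### Modal formulas -/

inductive MF : Type
  | atom : ℕ → MF
  | bot  : MF
  | and  : MF → MF → MF
  | or   : MF → MF → MF
  | imp  : MF → MF → MF
  | neg  : MF → MF
  | box  : MF → MF
  deriving DecidableEq

namespace MF

/-- The set of atoms occurring in a modal formula. -/
def atoms : MF → Set ℕ
  | atom n => {n}
  | bot => ∅
  | and A B => atoms A ∪ atoms B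
  | or A B => atoms A ∪ atoms B
  | imp A B => atoms A ∪ atoms B
  | neg A => atoms A
  | box A => atoms A

/-- A boolean valuation on modal formulas respecting the classical connectives
(boxed formulas and atoms are treated as arbitrary). -/
def Respects (v : MF → Bool) : Prop :=
  v bot = false ∧
  (∀ A B, v (and A B) = (v A && v B)) ∧
  (∀ A B, v (or A B) = (v A || v B)) ∧
  (∀ A B, v (imp A B) = (!(v A) || v B)) ∧
  (∀ A, v (neg A) = !(v A))

/-- Classical propositional tautology (in the modal language). -/
def IsTaut (A : MF) : Prop := ∀ v, Respects v → v A = true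

end MF

/-- Hilbert-style provability in the normal modal logic `K` extended by the
axiom scheme `Ax`: classical tautologies, scheme K, the extra axioms,
modus ponens and necessitation. -/
inductive Prv (Ax : MF → Prop) : MF → Prop
  | taut {A : MF} : MF.IsTaut A → Prv Ax A
  | axK {A B : MF} : Prv Ax ((MF.box (A.imp B)).imp ((MF.box A).imp (MF.box B)))
  | extra {A : MF} : Ax A → Prv Ax A
  | mp {A B : MF} : Prv Ax (A.imp B) → Prv Ax A → Prv Ax B
  | nec {A : MF} : Prv Ax A → Prv Ax A.box

/-- Scheme 4 : □A → □□A. -/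
def Ax4 (A : MF) : Prop := ∃ B, A = (MF.box B).imp (MF.box (MF.box B))
/-- Scheme T : □A → A. -/
def AxT (A : MF) : Prop := ∃ B, A = (MF.box B).imp B
/-- Scheme D : ¬□⊥. -/
def AxD (A : MF) : Prop := A = MF.neg (MF.box MF.bot)
/-- Löb's scheme L : □(□A→A) → □A. -/
def AxGL (A : MF) : Prop := ∃ B, A = (MF.box ((MF.box B).imp B)).imp (MF.box B)

def AxK4  : MF → Prop := Ax4
def AxKD4 : MF → Prop := fun A => Ax4 A ∨ AxD A
def AxS4  : MF → Prop := fun A => Ax4 A ∨ AxT A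

def PrvK   : MF → Prop := Prv (fun _ => False)
def PrvK4  : MF → Prop := Prv AxK4
def PrvKD4 : MF → Prop := Prv AxKD4
def PrvS4  : MF → Prop := Prv AxS4
def PrvGL  : MF → Prop := Prv AxGL

/-- Conjunction of a finite list of modal formulas (empty conjunction is ⊤ := ⊥→⊥). -/
def conjL (l : List MF) : MF := l.foldr MF.and (MF.imp MF.bot MF.bot)

/-- `ModalConseq Ax Γ A` : there are B₁,…,Bₙ ∈ Γ with ⊢ (B₁∧…∧Bₙ)→A in K + Ax. -/
def ModalConseq (Ax : MF → Prop) (Γ : Set MF) (A : MF) : Prop :=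
  ∃ l : List MF, (∀ B ∈ l, B ∈ Γ) ∧ Prv Ax ((conjL l).imp A)

/-! ### Annotated modal formulas and translations -/

/-- Modal formulas with every occurrence of □ annotated by a natural number. -/
inductive AMF : Type
  | atom : ℕ → AMF
  | bot  : AMF
  | and  : AMF → AMF → AMF
  | or   : AMF → AMF → AMF
  | imp  : AMF → AMF → AMF
  | neg  : AMF → AMF
  | box  : ℕ → AMF → AMF

namespace AMF

/-- Forget the annotations. -/
def erase : AMF → MF
  | atom n => .atom n
  | bot => .bot
  | and A B => .and (erase A) (erase B)
  | or A B => .or (erase A) (erase B)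
  | imp A B => .imp (erase A) (erase B)
  | neg A => .neg (erase A)
  | box _ A => .box (erase A)

/-- The list of all annotations occurring in an annotated formula. -/
def labels : AMF → List ℕ
  | atom _ => []
  | bot => []
  | and A B => labels A ++ labels B
  | or A B => labels A ++ labels B
  | imp A B => labels A ++ labels B
  | neg A => labels A
  | box n A => n :: labels A

/-- A translation is ordered when the number assigned to each box is strictly
greater than all numbers assigned to boxes in its scope. -/
def Ordered : AMF → Prop
  | atom _ => True
  | bot => True
  | and A B => Ordered A ∧ Ordered B
  | or A B => Ordered A ∧ Ordered B
  | imp A B => Ordered A ∧ Ordered B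
  | neg A => Ordered A
  | box n A => Ordered A ∧ ∀ m ∈ labels A, m < n

end AMF

/-- `conjQ q n` is the conjunction q₀ ∧ … ∧ q_n of the atoms `q i`. -/
def conjQ (q : ℕ → ℕ) : ℕ → MF
  | 0 => .atom (q 0)
  | n+1 => (conjQ q n).and (.atom (q (n+1)))

/-- The formula `A^t`: commutes with connectives and `(□B)^t = □(q₀∧…∧q_n → B^t)`
where `n` is the annotation on that box. -/
def AMF.trans (q : ℕ → ℕ) : AMF → MF
  | .atom n => .atom n
  | .bot => .bot
  | .and A B => (trans q A).and (trans q B)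
  | .or A B => (trans q A).or (trans q B)
  | .imp A B => (trans q A).imp (trans q B)
  | .neg A => (trans q A).neg
  | .box n A => .box ((conjQ q n).imp (trans q A))

/-! ### Kripke semantics -/

/-- Classical Kripke forcing for modal formulas. -/
def Forces {W : Type} (R : W → W → Prop) (V : ℕ → W → Prop) : W → MF → Prop
  | w, .atom n => V n w
  | _, .bot => False
  | w, .and A B => Forces R V w A ∧ Forces R V w B
  | w, .or A B => Forces R V w A ∨ Forces R V w B
  | w, .imp A B => Forces R V w A → Forces R V w B
  | w, .neg A => ¬ Forces R V w A
  | w, .box A => ∀ u, R w u → Forces R V u A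

/-- Cluster equivalence: `x = y`, or `x R y` and `y R x`. -/
def ClusterEq {W : Type} (R : W → W → Prop) (x y : W) : Prop :=
  x = y ∨ (R x y ∧ R y x)

/-- A transitive frame whose clusters form a tree and in which every cluster is
a single irreflexive point or a nonempty set of reflexive points. -/
structure TreeWithClusters {W : Type} (R : W → W → Prop) : Prop where
  trans : Transitive R
  rooted : ∃ r, ∀ x, ClusterEq R r x ∨ R r x
  treelike : ∀ x y z, R x z → R y z → (ClusterEq R x y ∨ R x y ∨ R y x)
  cluster_irrefl_singleton : ∀ x, ¬ R x x → ∀ y, ClusterEq R x y → y = x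
  cluster_homog : ∀ x y, ClusterEq R x y → (R x x → R y y)

/-! ### Expansions -/

/-- `Expansion A B` : `B ∈ E(A)`, the set of expansions of `A`. -/
inductive Expansion : MF → MF → Prop
  | atom (n) : Expansion (.atom n) (.atom n)
  | bot : Expansion .bot .bot
  | and {A B D E : MF} : Expansion A D → Expansion B E → Expansion (A.and B) (D.and E)
  | or {A B D E : MF} : Expansion A D → Expansion B E → Expansion (A.or B) (D.or E)
  | imp {A B D E : MF} : Expansion A D → Expansion B E → Expansion (A.imp B) (D.imp E)
  | neg {A D : MF} : Expansion A D → Expansion A.neg D.neg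
  | box {A D : MF} (l : List MF) : Expansion A D → (∀ E ∈ l, Expansion A E) →
      Expansion A.box (MF.box (l.foldr MF.or D))

/-! ### Propositional formulas and Visser-style natural deduction -/

inductive PF : Type
  | atom : ℕ → PF
  | bot  : PF
  | and  : PF → PF → PF
  | or   : PF → PF → PF
  | imp  : PF → PF → PF
  deriving DecidableEq

def PF.top : PF := .imp .bot .bot
def PF.neg (A : PF) : PF := A.imp .bot

/-- Natural deduction derivability from a set of assumptions.  `ef` switches
the ex falso rule on/off; `Rule` is an additional rule given as a relation
between a list of premises and a conclusion.  The base system (with `ef`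
and no extra rule) is Visser's BPC: ∧/∨ intro and elim, →I (discharging),
ex falso, and the formalized rules; no modus ponens. -/
inductive Deriv (ef : Prop) (Rule : List PF → PF → Prop) : Set PF → PF → Prop
  | hyp {Γ : Set PF} {A : PF} : A ∈ Γ → Deriv ef Rule Γ A
  | andI {Γ : Set PF} {A B : PF} : Deriv ef Rule Γ A → Deriv ef Rule Γ B → Deriv ef Rule Γ (A.and B)
  | andE1 {Γ : Set PF} {A B : PF} : Deriv ef Rule Γ (A.and B) → Deriv ef Rule Γ A
  | andE2 {Γ : Set PF} {A B : PF} : Deriv ef Rule Γ (A.and B) → Deriv ef Rule Γ B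
  | orI1 {Γ : Set PF} {A B : PF} : Deriv ef Rule Γ A → Deriv ef Rule Γ (A.or B)
  | orI2 {Γ : Set PF} {A B : PF} : Deriv ef Rule Γ B → Deriv ef Rule Γ (A.or B)
  | orE {Γ : Set PF} {A B C : PF} : Deriv ef Rule Γ (A.or B) → Deriv ef Rule (insert A Γ) C →
      Deriv ef Rule (insert B Γ) C → Deriv ef Rule Γ C
  | impI {Γ : Set PF} {A B : PF} : Deriv ef Rule (insert A Γ) B → Deriv ef Rule Γ (A.imp B)
  | exfalso {Γ : Set PF} {A : PF} : ef → Deriv ef Rule Γ .bot → Deriv ef Rule Γ A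
  | fAndI {Γ : Set PF} {A B C : PF} : Deriv ef Rule Γ (A.imp B) → Deriv ef Rule Γ (A.imp C) →
      Deriv ef Rule Γ (A.imp (B.and C))
  | fOrE {Γ : Set PF} {A B C : PF} : Deriv ef Rule Γ (A.imp C) → Deriv ef Rule Γ (B.imp C) →
      Deriv ef Rule Γ ((A.or B).imp C)
  | fTr {Γ : Set PF} {A B C : PF} : Deriv ef Rule Γ (A.imp B) → Deriv ef Rule Γ (B.imp C) →
      Deriv ef Rule Γ (A.imp C)
  | extra {Γ : Set PF} {ps : List PF} {c : PF} : Rule ps c → (∀ p ∈ ps, Deriv ef Rule Γ p) → Deriv ef Rule Γ c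

/-- No extra rule. -/
def RuleNone : List PF → PF → Prop := fun _ _ => False
/-- Rule C : from A and ¬A infer ⊥. -/
def RuleC : List PF → PF → Prop := fun ps c => ∃ A : PF, ps = [A, A.neg] ∧ c = .bot
/-- Rule R (modus ponens) : from A and A→B infer B. -/
def RuleR : List PF → PF → Prop := fun ps c => ∃ A B : PF, ps = [A, A.imp B] ∧ c = B
/-- Löb's rule L : from (A∧(A→B))→B infer A→B. -/
def RuleL : List PF → PF → Prop :=
  fun ps c => ∃ A B : PF, ps = [(A.and (A.imp B)).imp B] ∧ c = A.imp B
/-- Rule C' : from ⊤→⊥ infer ⊥. -/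
def RuleC' : List PF → PF → Prop := fun ps c => ps = [PF.top.imp .bot] ∧ c = .bot
/-- Rule R' : from ⊤→A infer A. -/
def RuleR' : List PF → PF → Prop := fun ps c => ∃ A : PF, ps = [PF.top.imp A] ∧ c = A
/-- Rule L' : from (⊤→A)→A infer ⊤→A. -/
def RuleL' : List PF → PF → Prop :=
  fun ps c => ∃ A : PF, ps = [(PF.top.imp A).imp A] ∧ c = PF.top.imp A

def BPC  : Set PF → PF → Prop := Deriv True RuleNone
def EBPC : Set PF → PF → Prop := Deriv True RuleC
def IPC  : Set PF → PF → Prop := Deriv True RuleR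
def FPL  : Set PF → PF → Prop := Deriv True RuleL
def MPC  : Set PF → PF → Prop := Deriv False RuleR

/-! ### BHK translations -/

/-- The BHK translation `b`. -/
def bhk : PF → MF
  | .atom n => .box (.atom n)
  | .bot => .box .bot
  | .and A B => (bhk A).and (bhk B)
  | .or A B => (bhk A).or (bhk B)
  | .imp A B => .box ((bhk A).imp (bhk B))

/-- The weak BHK translation `w`.  The propositional atom `n` is embedded as
the modal atom `n+1`, and the fresh atom `q` (not in the propositional
language) is the modal atom `0`; `⊥^w = □q`. -/
def wtr : PF → MF
  | .atom n => .box (.atom (n+1))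
  | .bot => .box (.atom 0)
  | .and A B => (wtr A).and (wtr B)
  | .or A B => (wtr A).or (wtr B)
  | .imp A B => .box ((wtr A).imp (wtr B))

/-! ### The cut-free sequent calculus G(KD4) -/

/-- Cut-free derivability in the sequent calculus G(KD4): axioms,
structural rules (weakening, contraction, exchange), two-sided rules for
∧, ∨, →, ¬, and the modal rules □₄R and □_D R. -/
inductive GKD4 : List MF → List MF → Prop
  | ax (A) : GKD4 [A] [A]
  | axBot : GKD4 [.bot] []
  | exL {Γ Γ' Δ : List MF} : GKD4 Γ Δ → Γ.Perm Γ' → GKD4 Γ' Δ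
  | exR {Γ Δ Δ' : List MF} : GKD4 Γ Δ → Δ.Perm Δ' → GKD4 Γ Δ'
  | wL {Γ Δ : List MF} (A : MF) : GKD4 Γ Δ → GKD4 (A :: Γ) Δ
  | wR {Γ Δ : List MF} (A : MF) : GKD4 Γ Δ → GKD4 Γ (A :: Δ)
  | cL {Γ Δ : List MF} {A : MF} : GKD4 (A :: A :: Γ) Δ → GKD4 (A :: Γ) Δ
  | cR {Γ Δ : List MF} {A : MF} : GKD4 Γ (A :: A :: Δ) → GKD4 Γ (A :: Δ)
  | andL1 {Γ Δ : List MF} {A B : MF} : GKD4 (A :: Γ) Δ → GKD4 (A.and B :: Γ) Δ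
  | andL2 {Γ Δ : List MF} {A B : MF} : GKD4 (B :: Γ) Δ → GKD4 (A.and B :: Γ) Δ
  | andR {Γ₀ Δ₀ Γ₁ Δ₁ : List MF} {A B : MF} : GKD4 Γ₀ (A :: Δ₀) → GKD4 Γ₁ (B :: Δ₁) →
      GKD4 (Γ₀ ++ Γ₁) (A.and B :: (Δ₀ ++ Δ₁))
  | orL {Γ₀ Δ₀ Γ₁ Δ₁ : List MF} {A B : MF} : GKD4 (A :: Γ₀) Δ₀ → GKD4 (B :: Γ₁) Δ₁ →
      GKD4 (A.or B :: (Γ₀ ++ Γ₁)) (Δ₀ ++ Δ₁)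
  | orR1 {Γ Δ : List MF} {A B : MF} : GKD4 Γ (A :: Δ) → GKD4 Γ (A.or B :: Δ)
  | orR2 {Γ Δ : List MF} {A B : MF} : GKD4 Γ (B :: Δ) → GKD4 Γ (A.or B :: Δ)
  | impL {Γ₀ Δ₀ Γ₁ Δ₁ : List MF} {A B : MF} : GKD4 Γ₀ (A :: Δ₀) → GKD4 (B :: Γ₁) Δ₁ →
      GKD4 (A.imp B :: (Γ₀ ++ Γ₁)) (Δ₀ ++ Δ₁)
  | impR {Γ Δ : List MF} {A B : MF} : GKD4 (A :: Γ) (B :: Δ) → GKD4 Γ (A.imp B :: Δ)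
  | negL {Γ Δ : List MF} {A : MF} : GKD4 Γ (A :: Δ) → GKD4 (A.neg :: Γ) Δ
  | negR {Γ Δ : List MF} {A : MF} : GKD4 (A :: Γ) Δ → GKD4 Γ (A.neg :: Δ)
  | box4R {Γ : List MF} {A : MF} : GKD4 (Γ ++ Γ.map MF.box) [A] → GKD4 (Γ.map MF.box) [MF.box A]
  | boxDR {Γ : List MF} : GKD4 (Γ ++ Γ.map MF.box) [] → GKD4 (Γ.map MF.box) []

/-- Disjunction of a finite list of propositional formulas (empty: ⊥). -/
def disjL : List PF → PF
  | [] => .bot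
  | [A] => A
  | A :: B :: r => A.or (disjL (B :: r))

/-! ### Kripke semantics for MPC -/

/-- Intuitionistic (minimal) forcing, where `⊥` has its own upward-closed
valuation `Vbot`. -/
def MForces {W : Type} (le : W → W → Prop) (V : ℕ → W → Prop) (Vbot : W → Prop) :
    W → PF → Prop
  | w, .atom n => V n w
  | w, .bot => Vbot w
  | w, .and A B => MForces le V Vbot w A ∧ MForces le V Vbot w B
  | w, .or A B => MForces le V Vbot w A ∨ MForces le V Vbot w B
  | w, .imp A B => ∀ u, le w u → MForces le V Vbot u A → MForces le V Vbot u B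

/-- The S4 valuation induced by an MPC valuation: the fresh atom `q` (modal
atom 0) gets `V(⊥)`, and the propositional atom `n` (modal atom `n+1`) gets `V(n)`. -/
def shiftVal {W : Type} (V : ℕ → W → Prop) (Vbot : W → Prop) : ℕ → W → Prop
  | 0 => Vbot
  | n+1 => V n

/-!
Left to right: in `GL` every translated formula `B` satisfies `B → □B`, so `→I` is simulated by the
deduction theorem followed by necessitation, and Löb's rule becomes Löb's axiom.

Right to left: a `GL` proof is sound on transitive conversely well-founded Kripke models, so it
suffices to refute on such a model the translation of every unprovable formula. Basic forcing
(`MForces` along a relation that need not be reflexive, with `⊥` nowhere forced) on such a frame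
refutes everything that `FPL` does not prove: the worlds are the prime theories inside a finite
subformula-closed set, and Löb's rule makes strictly larger theories suffice as successors in the
case of an implication. Giving each world a terminal "shadow" successor with the same atoms turns
basic forcing of `A` into classical forcing of `bhk A`: the shadow detects `□p` and `□⊥`, while it
forces every translated formula, all boxes being vacuous there.
-/

namespace MF.Respects

variable {v : MF → Bool} {A B : MF}

theorem bot_ne_true (hv : Respects v) : ¬ v bot = true := by
  simp [hv.1]

theorem and_iff (hv : Respects v) : v (A.and B) = true ↔ v A = true ∧ v B = true := by
  simp [hv.2.1]

theorem or_iff (hv : Respects v) : v (A.or B) = true ↔ v A = true ∨ v B = true := by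
  simp [hv.2.2.1]

theorem imp_iff (hv : Respects v) : v (A.imp B) = true ↔ (v A = true → v B = true) := by
  simp [hv.2.2.2.1, imp_iff_not_or]

theorem conjL_iff (hv : Respects v) (l : List MF) :
    v (conjL l) = true ↔ ∀ B ∈ l, v B = true := by
  induction l with
  | nil => exact iff_of_true (hv.imp_iff.2 id) (by simp)
  | cons B l ih =>
    change v (B.and (conjL l)) = true ↔ _
    rw [hv.and_iff, ih, List.forall_mem_cons]

end MF.Respects

namespace Prv

variable {Ax : MF → Prop} {A B C : MF}

theorem imp_trans (hAB : Prv Ax (A.imp B)) (hBC : Prv Ax (B.imp C)) : Prv Ax (A.imp C) :=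
  ((taut fun v hv => by simp only [hv.imp_iff]; tauto).mp hAB).mp hBC

theorem box_mono (h : Prv Ax (A.imp B)) : Prv Ax (A.box.imp B.box) :=
  axK.mp h.nec

theorem box_mono₂ (h : Prv Ax (A.imp (B.imp C))) : Prv Ax (A.box.imp (B.box.imp C.box)) :=
  h.box_mono.imp_trans axK

theorem loeb (A : MF) : Prv AxGL ((A.box.imp A).box.imp A.box) :=
  extra ⟨A, rfl⟩

-- Löb's axiom applied to `A ∧ □A`.
theorem four_of_loeb (A : MF) : Prv AxGL (A.box.imp A.box.box) := by
  have box_left : Prv AxGL ((A.and A.box).box.imp A.box) :=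
    box_mono (taut fun v hv => by simp only [hv.imp_iff, hv.and_iff]; tauto)
  have box_right : Prv AxGL ((A.and A.box).box.imp A.box.box) :=
    box_mono (taut fun v hv => by simp only [hv.imp_iff, hv.and_iff]; tauto)
  have loeb_premise : Prv AxGL (A.imp ((A.and A.box).box.imp (A.and A.box))) :=
    (taut fun v hv => by simp only [hv.imp_iff, hv.and_iff]; tauto).mp box_left
  exact (loeb_premise.box_mono.imp_trans (loeb _)).imp_trans box_right

end Prv

/-- `A` is box-stable in `K + Ax` when `A → □A` is provable. This is the modal counterpart of
persistence, and what lets assumptions survive necessitation. -/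
def BoxStable (Ax : MF → Prop) (A : MF) : Prop := Prv Ax (A.imp A.box)

namespace BoxStable

variable {Ax : MF → Prop} {A B : MF}

theorem of_prv (h : Prv Ax A) : BoxStable Ax A :=
  (Prv.taut fun v hv => by simp only [hv.imp_iff]; tauto).mp h.nec

theorem and (hA : BoxStable Ax A) (hB : BoxStable Ax B) : BoxStable Ax (A.and B) := by
  have box_and : Prv Ax (A.box.imp (B.box.imp (A.and B).box)) :=
    Prv.box_mono₂ (Prv.taut fun v hv => by simp only [hv.imp_iff, hv.and_iff]; tauto)
  refine (((Prv.taut fun v hv => ?_).mp hA).mp hB).mp box_and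
  simp only [hv.imp_iff, hv.and_iff]
  tauto

theorem or (hA : BoxStable Ax A) (hB : BoxStable Ax B) : BoxStable Ax (A.or B) := by
  have box_inl : Prv Ax (A.box.imp (A.or B).box) :=
    Prv.box_mono (Prv.taut fun v hv => by simp only [hv.imp_iff, hv.or_iff]; tauto)
  have box_inr : Prv Ax (B.box.imp (A.or B).box) :=
    Prv.box_mono (Prv.taut fun v hv => by simp only [hv.imp_iff, hv.or_iff]; tauto)
  refine ((Prv.taut fun v hv => ?_).mp (hA.imp_trans box_inl)).mp (hB.imp_trans box_inr)
  simp only [hv.imp_iff, hv.or_iff]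
  tauto

theorem conjL {l : List MF} (hl : ∀ B ∈ l, BoxStable Ax B) : BoxStable Ax (conjL l) := by
  induction l with
  | nil => exact of_prv (Prv.taut fun v hv => hv.imp_iff.2 id)
  | cons B l ih =>
    obtain ⟨hB, hl⟩ := List.forall_mem_cons.1 hl
    exact hB.and (ih hl)

theorem bhk (h4 : ∀ A : MF, BoxStable Ax A.box) : ∀ A : PF, BoxStable Ax (bhk A)
  | .atom _ => h4 _
  | .bot => h4 _
  | .and A B => (bhk h4 A).and (bhk h4 B)
  | .or A B => (bhk h4 A).or (bhk h4 B)
  | .imp _ _ => h4 _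

end BoxStable

theorem Prv.box_bot_imp_bhk {Ax : MF → Prop} : ∀ A : PF, Prv Ax (MF.bot.box.imp (bhk A))
  | .atom _ | .bot | .imp _ _ =>
    box_mono (taut fun _ hv => hv.imp_iff.2 fun h => (hv.bot_ne_true h).elim)
  | .and A B =>
    ((taut fun v hv => by simp only [bhk, hv.imp_iff, hv.and_iff]; tauto).mp
      (box_bot_imp_bhk A)).mp (box_bot_imp_bhk B)
  | .or A B =>
    (box_bot_imp_bhk A).imp_trans
      (taut fun v hv => by simp only [bhk, hv.imp_iff, hv.or_iff]; tauto)

namespace ModalConseq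

variable {Ax : MF → Prop} {Γ : Set MF} {A B C : MF}

theorem of_mem (h : A ∈ Γ) : ModalConseq Ax Γ A :=
  ⟨[A], by simpa using h, Prv.taut fun v hv => by simp [hv.imp_iff, hv.conjL_iff]⟩

theorem of_prv (h : Prv Ax A) : ModalConseq Ax Γ A :=
  ⟨[], by simp, (Prv.taut fun v hv => by simp only [hv.imp_iff]; tauto).mp h⟩

theorem mp (hAB : ModalConseq Ax Γ (A.imp B)) (hA : ModalConseq Ax Γ A) : ModalConseq Ax Γ B := by
  obtain ⟨l, hl, hAB⟩ := hAB
  obtain ⟨m, hm, hA⟩ := hA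
  refine ⟨l ++ m, List.forall_mem_append.2 ⟨hl, hm⟩, ((Prv.taut fun v hv => ?_).mp hAB).mp hA⟩
  simp only [hv.imp_iff, hv.conjL_iff, List.forall_mem_append]
  tauto

theorem map (h : Prv Ax (A.imp B)) (hA : ModalConseq Ax Γ A) : ModalConseq Ax Γ B :=
  (of_prv h).mp hA

theorem map₂ (h : Prv Ax (A.imp (B.imp C))) (hA : ModalConseq Ax Γ A)
    (hB : ModalConseq Ax Γ B) : ModalConseq Ax Γ C :=
  (hA.map h).mp hB

theorem imp_of_insert (h : ModalConseq Ax (insert A Γ) B) : ModalConseq Ax Γ (A.imp B) := by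
  obtain ⟨l, hl, h⟩ := h
  refine ⟨l.filter (· ≠ A), fun C hC => ?_, (Prv.taut fun v hv => ?_).mp h⟩
  · obtain ⟨hCl, hCA⟩ : C ∈ l ∧ C ≠ A := by simpa using hC
    exact (hl C hCl).resolve_left hCA
  · simp only [hv.imp_iff, hv.conjL_iff]
    intro hB hrest hA
    refine hB fun C hC => ?_
    by_cases hCA : C = A
    · exact hCA ▸ hA
    · exact hrest C (by simp [hC, hCA])

theorem box (hΓ : ∀ B ∈ Γ, BoxStable Ax B) (h : ModalConseq Ax Γ A) : ModalConseq Ax Γ A.box := by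
  obtain ⟨l, hl, h⟩ := h
  exact ⟨l, hl, (BoxStable.conjL fun B hB => hΓ B (hl B hB)).imp_trans h.box_mono⟩

theorem exists_finite_of_image {α : Type*} {f : α → MF} {Γ : Set α}
    (h : ModalConseq Ax (f '' Γ) A) : ∃ Δ ⊆ Γ, Δ.Finite ∧ ModalConseq Ax (f '' Δ) A := by
  obtain ⟨l, hl, h⟩ := h
  obtain ⟨Δ, hΔΓ, hΔl⟩ := Finset.subset_set_image_iff.1
    (show (l.toFinset : Set MF) ⊆ f '' Γ from fun B hB => hl B (by simpa using hB))
  refine ⟨Δ, hΔΓ, Δ.finite_toSet, l, fun B hB => ?_, h⟩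
  rw [← Finset.coe_image, hΔl]
  simpa using hB

end ModalConseq

theorem Deriv.modalConseq_bhk {ef : Prop} {Rule : List PF → PF → Prop} {Ax : MF → Prop}
    (h4 : ∀ A : MF, BoxStable Ax A.box)
    (hRule : ∀ {ps c}, Rule ps c → ∀ {Δ}, (∀ p ∈ ps, ModalConseq Ax Δ (bhk p)) →
      ModalConseq Ax Δ (bhk c))
    {Γ : Set PF} {A : PF} (h : Deriv ef Rule Γ A) : ModalConseq Ax (bhk '' Γ) (bhk A) := by
  induction h with
  | hyp h => exact .of_mem (Set.mem_image_of_mem bhk h)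
  | andI _ _ hA hB =>
    exact hA.map₂ (.taut fun v hv => by simp only [bhk, hv.imp_iff, hv.and_iff]; tauto) hB
  | andE1 _ h | andE2 _ h =>
    exact h.map (.taut fun v hv => by simp only [bhk, hv.imp_iff, hv.and_iff]; tauto)
  | orI1 _ h | orI2 _ h =>
    exact h.map (.taut fun v hv => by simp only [bhk, hv.imp_iff, hv.or_iff]; tauto)
  | orE _ _ _ h hA hB =>
    rw [Set.image_insert_eq] at hA hB
    refine .mp (hA.imp_of_insert.map₂ (.taut fun v hv => ?_) hB.imp_of_insert) h
    simp only [bhk, hv.imp_iff, hv.or_iff]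
    tauto
  | impI _ h =>
    rw [Set.image_insert_eq] at h
    exact h.imp_of_insert.box (Set.forall_mem_image.2 fun B _ => .bhk h4 B)
  | exfalso _ _ h => exact h.map (.box_bot_imp_bhk _)
  | fAndI _ _ hB hC =>
    refine hB.map₂ (.box_mono₂ (.taut fun v hv => ?_)) hC
    simp only [bhk, hv.imp_iff, hv.and_iff]
    tauto
  | fOrE _ _ hA hB =>
    refine hA.map₂ (.box_mono₂ (.taut fun v hv => ?_)) hB
    simp only [bhk, hv.imp_iff, hv.or_iff]
    tauto
  | fTr _ _ hAB hBC =>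
    exact hAB.map₂ (.box_mono₂ (.taut fun v hv => by simp only [hv.imp_iff]; tauto)) hBC
  | extra hr _ h => exact hRule hr h

theorem ModalConseq.bhk_of_ruleL {ps : List PF} {c : PF} (hr : RuleL ps c) {Δ : Set MF}
    (h : ∀ p ∈ ps, ModalConseq AxGL Δ (bhk p)) : ModalConseq AxGL Δ (bhk c) := by
  obtain ⟨A, B, rfl, rfl⟩ := hr
  refine (h _ (List.mem_singleton_self _)).map
    ((Prv.box_mono (.taut fun v hv => ?_)).imp_trans (.loeb _))
  simp only [bhk, hv.imp_iff, hv.and_iff]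
  tauto

/-- The frames of `GL`: transitive and without infinite ascending chains. -/
structure IsGLFrame {W : Type} (R : W → W → Prop) : Prop where
  trans : ∀ {x y z}, R x y → R y z → R x z
  wellFounded_flip : WellFounded (flip R)

/-- Truth of atoms is inherited by successors. -/
def Persistent {W : Type} (R : W → W → Prop) (V : ℕ → W → Prop) : Prop :=
  ∀ ⦃n w u⦄, R w u → V n w → V n u

section Forcing

variable {W : Type} {R : W → W → Prop} {V : ℕ → W → Prop}

open scoped Classical in
theorem respects_forces (R : W → W → Prop) (V : ℕ → W → Prop) (w : W) :
    MF.Respects fun A => decide (Forces R V w A) := by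
  refine ⟨decide_eq_false id, fun A B => ?_, fun A B => ?_, fun A B => ?_, fun A => ?_⟩ <;>
    simp only [← Bool.decide_and, ← Bool.decide_or, ← decide_not, decide_eq_decide]
  exacts [Iff.rfl, Iff.rfl, imp_iff_not_or, Iff.rfl]

theorem Prv.forces {Ax : MF → Prop} (hAx : ∀ A, Ax A → ∀ w, Forces R V w A) {A : MF}
    (h : Prv Ax A) (w : W) : Forces R V w A := by
  classical
  induction h generalizing w with
  | taut h => simpa using h _ (respects_forces R V w)
  | axK => exact fun hAB hA u hwu => hAB u hwu (hA u hwu)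
  | extra h => exact hAx _ h w
  | mp _ _ hAB hA => exact hAB w (hA w)
  | nec _ h => exact fun u _ => h u

theorem IsGLFrame.forces_axGL (hR : IsGLFrame R) {A : MF} (h : AxGL A) (w : W) :
    Forces R V w A := by
  obtain ⟨B, rfl⟩ := h
  intro hLoeb u
  induction u using hR.wellFounded_flip.induction with
  | _ u ih => exact fun hwu => hLoeb u hwu fun x hux => ih x hux (hR.trans hwu hux)

theorem forces_conjL {w : W} {l : List MF} (h : ∀ B ∈ l, Forces R V w B) :
    Forces R V w (conjL l) := by
  induction l with
  | nil => exact id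
  | cons B l ih =>
    obtain ⟨hB, hl⟩ := List.forall_mem_cons.1 h
    exact ⟨hB, ih hl⟩

theorem ModalConseq.forces (hR : IsGLFrame R) {Γ : Set MF} {A : MF} (h : ModalConseq AxGL Γ A)
    {w : W} (hΓ : ∀ B ∈ Γ, Forces R V w B) : Forces R V w A := by
  obtain ⟨l, hl, h⟩ := h
  exact h.forces (fun _ => hR.forces_axGL) w (forces_conjL fun B hB => hΓ B (hl B hB))

/-- The frame obtained from `R` by giving each world `w` (now `Sum.inl w`) a terminal copy
`Sum.inr w`, seen from `w` and from everything below `w`. -/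
def ShadowRel (R : W → W → Prop) : W ⊕ W → W ⊕ W → Prop
  | .inl w, .inl u => R w u
  | .inl w, .inr u => w = u ∨ R w u
  | .inr _, _ => False

/-- The valuation on the shadowed frame in which a world and its shadow agree. -/
def shadowVal (V : ℕ → W → Prop) (n : ℕ) : W ⊕ W → Prop := Sum.elim (V n) (V n)

theorem IsGLFrame.shadowRel (hR : IsGLFrame R) : IsGLFrame (ShadowRel R) where
  trans {x y z} hxy hyz := by
    match x, y, z, hxy, hyz with
    | .inl _, .inl _, .inl _, hxy, hyz => exact hR.trans hxy hyz
    | .inl _, .inl _, .inr _, hxy, .inl rfl => exact .inr hxy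
    | .inl _, .inl _, .inr _, hxy, .inr hyz => exact .inr (hR.trans hxy hyz)
  wellFounded_flip := by
    have acc_inr (w : W) : Acc (flip (ShadowRel R)) (.inr w) := ⟨_, fun _ h => h.elim⟩
    refine ⟨Sum.rec (fun w => ?_) acc_inr⟩
    induction w using hR.wellFounded_flip.induction with
    | _ w ih => exact ⟨_, Sum.rec ih fun u _ => acc_inr u⟩

theorem forces_shadow_bhk (w : W) :
    ∀ A : PF, Forces (ShadowRel R) (shadowVal V) (.inr w) (bhk A)
  | .atom _ | .bot | .imp _ _ => fun _ h => h.elim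
  | .and A B => ⟨forces_shadow_bhk w A, forces_shadow_bhk w B⟩
  | .or A _ => .inl (forces_shadow_bhk w A)

theorem forces_bhk_iff_mForces (hV : Persistent R V) (A : PF) (w : W) :
    Forces (ShadowRel R) (shadowVal V) (.inl w) (bhk A) ↔ MForces R V (fun _ => False) w A := by
  induction A generalizing w with
  | atom n =>
    refine ⟨fun h => h (.inr w) (.inl rfl), fun h => ?_⟩
    rintro (u | u) hwu
    · exact hV hwu h
    · exact hwu.elim (fun hwu => hwu ▸ h) fun hwu => hV hwu h
  | bot => exact ⟨fun h => h (.inr w) (.inl rfl), False.elim⟩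
  | and A B ihA ihB => exact and_congr (ihA w) (ihB w)
  | or A B ihA ihB => exact or_congr (ihA w) (ihB w)
  | imp A B ihA ihB =>
    refine ⟨fun h u hwu hA => (ihB u).1 (h (.inl u) hwu ((ihA u).2 hA)), fun h => ?_⟩
    rintro (u | u) hwu hA
    · exact (ihB u).2 (h u hwu ((ihA u).1 hA))
    · exact forces_shadow_bhk u B

end Forcing

namespace Deriv

variable {ef : Prop} {Rule : List PF → PF → Prop} {Γ Δ T : Set PF} {A B : PF}

-- Quantifying over the supersets of `Δ` lets one induction yield both weakening and cut.
theorem of_forall_superset (h : Deriv ef Rule Γ A)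
    (hΓ : ∀ X ∈ Γ, ∀ Θ ⊇ Δ, Deriv ef Rule Θ X) : Deriv ef Rule Δ A := by
  have insert_assumption {Γ Δ : Set PF} (B : PF) (hΓ : ∀ X ∈ Γ, ∀ Θ ⊇ Δ, Deriv ef Rule Θ X) :
      ∀ X ∈ insert B Γ, ∀ Θ ⊇ insert B Δ, Deriv ef Rule Θ X := by
    rintro X (rfl | hX) Θ hΘ
    · exact hyp (hΘ (Set.mem_insert _ _))
    · exact hΓ X hX Θ ((Set.subset_insert _ _).trans hΘ)
  induction h generalizing Δ with
  | hyp h => exact hΓ _ h _ subset_rfl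
  | andI _ _ ihA ihB => exact andI (ihA hΓ) (ihB hΓ)
  | andE1 _ ih => exact andE1 (ih hΓ)
  | andE2 _ ih => exact andE2 (ih hΓ)
  | orI1 _ ih => exact orI1 (ih hΓ)
  | orI2 _ ih => exact orI2 (ih hΓ)
  | orE _ _ _ ih ihA ihB =>
    exact orE (ih hΓ) (ihA (insert_assumption _ hΓ)) (ihB (insert_assumption _ hΓ))
  | impI _ ih => exact impI (ih (insert_assumption _ hΓ))
  | exfalso e _ ih => exact exfalso e (ih hΓ)
  | fAndI _ _ ihB ihC => exact fAndI (ihB hΓ) (ihC hΓ)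
  | fOrE _ _ ihA ihB => exact fOrE (ihA hΓ) (ihB hΓ)
  | fTr _ _ ihAB ihBC => exact fTr (ihAB hΓ) (ihBC hΓ)
  | extra r _ ih => exact extra r fun p hp => ih p hp hΓ

theorem mono (h : Deriv ef Rule Γ A) (hΓΔ : Γ ⊆ Δ) : Deriv ef Rule Δ A :=
  h.of_forall_superset fun _ hX _ hΘ => hyp (hΘ (hΓΔ hX))

theorem cut (h : Deriv ef Rule Γ A) (hΓ : ∀ X ∈ Γ, Deriv ef Rule Δ X) : Deriv ef Rule Δ A :=
  h.of_forall_superset fun X hX _ hΘ => (hΓ X hX).mono hΘ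

theorem imp_of_singleton (h : Deriv ef Rule {A} B) : Deriv ef Rule T (A.imp B) :=
  impI (h.mono (by simp))

theorem imp_self : Deriv ef Rule T (A.imp A) :=
  imp_of_singleton (hyp rfl)

end Deriv

/-- `G` is interderivable with the set of assumptions `U`, hence plays the role of the conjunction
of `U`. -/
structure IsConjunction (ef : Prop) (Rule : List PF → PF → Prop) (U : Set PF) (G : PF) : Prop where
  deriv : Deriv ef Rule U G
  deriv_of_mem : ∀ X ∈ U, Deriv ef Rule {G} X

/-- `C` follows from `U` together with the implications derivable from `T`. A theory closed under
this relation is a successor of `T` in the canonical model. -/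
def RelDeriv (ef : Prop) (Rule : List PF → PF → Prop) (T U : Set PF) (C : PF) : Prop :=
  ∃ P, Deriv ef Rule U P ∧ Deriv ef Rule T (P.imp C)

section RelDeriv

variable {ef : Prop} {Rule : List PF → PF → Prop} {T U : Set PF} {B C D G : PF}

theorem IsConjunction.insert (hG : IsConjunction ef Rule U G) (C : PF) :
    IsConjunction ef Rule (insert C U) (G.and C) where
  deriv := .andI (hG.deriv.mono (Set.subset_insert _ _)) (.hyp (Set.mem_insert _ _))
  deriv_of_mem := by
    rintro X (rfl | hX)
    · exact .andE2 (.hyp rfl)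
    · exact (hG.deriv_of_mem X hX).cut fun Y hY => hY ▸ .andE1 (.hyp rfl)

theorem exists_isConjunction (ef : Prop) (Rule : List PF → PF → Prop) (hU : U.Finite) :
    ∃ G, IsConjunction ef Rule U G := by
  induction U, hU using Set.Finite.induction_on with
  | empty => exact ⟨PF.top, .imp_self, by simp⟩
  | insert _ _ ih =>
    obtain ⟨G, hG⟩ := ih
    exact ⟨_, hG.insert _⟩

namespace RelDeriv

theorem of_deriv (h : Deriv ef Rule U C) : RelDeriv ef Rule T U C :=
  ⟨C, h, .imp_self⟩

theorem imp_of_isConjunction (h : RelDeriv ef Rule T U C) (hG : IsConjunction ef Rule U G) :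
    Deriv ef Rule T (G.imp C) := by
  obtain ⟨P, hUP, hTPC⟩ := h
  exact .fTr (.imp_of_singleton (hUP.cut hG.deriv_of_mem)) hTPC

theorem cut (hU : U.Finite) (hC : RelDeriv ef Rule T U C)
    (hB : RelDeriv ef Rule T (insert C U) B) : RelDeriv ef Rule T U B := by
  obtain ⟨G, hG⟩ := exists_isConjunction ef Rule hU
  have hGC : Deriv ef Rule T (G.imp (G.and C)) := .fAndI .imp_self (hC.imp_of_isConjunction hG)
  exact ⟨G, hG.deriv, .fTr hGC (hB.imp_of_isConjunction (hG.insert C))⟩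

theorem or_elim (hU : U.Finite) (hC : RelDeriv ef Rule T (insert C U) B)
    (hD : RelDeriv ef Rule T (insert D U) B) : RelDeriv ef Rule T (insert (C.or D) U) B := by
  obtain ⟨G, hG⟩ := exists_isConjunction ef Rule hU
  have deriv_and (X Y : PF) : Deriv ef Rule (insert X (insert Y U)) (G.and X) :=
    (hG.insert X).deriv.mono (Set.insert_subset_insert (Set.subset_insert _ _))
  refine ⟨(G.and C).or (G.and D), ?_, .fOrE (hC.imp_of_isConjunction (hG.insert C))
    (hD.imp_of_isConjunction (hG.insert D))⟩
  exact .orE (.hyp (Set.mem_insert _ _)) (.orI1 (deriv_and C _)) (.orI2 (deriv_and D _))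

end RelDeriv

end RelDeriv

/-- An entailment relation extending derivability and admitting cut and proof by cases, which is
what the construction of prime theories needs. Only finite sets of assumptions are considered. -/
structure IsEntailment (Rule : List PF → PF → Prop) (E : Set PF → PF → Prop) : Prop where
  of_deriv : ∀ {U C}, Deriv True Rule U C → E U C
  cut : ∀ {U C B}, U.Finite → E U C → E (insert C U) B → E U B
  or_elim : ∀ {U C D B}, U.Finite → E (insert C U) B → E (insert D U) B →
    E (insert (C.or D) U) B

/-- `T` is a consistent prime theory within the set of formulas `S`: `T` contains the formulas of
`S` that it entails. -/
structure IsPrimeTheory (E : Set PF → PF → Prop) (S T : Set PF) : Prop where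
  subset : T ⊆ S
  mem_of_entails : ∀ {C}, C ∈ S → E T C → C ∈ T
  mem_or_mem : ∀ {C D}, C ∈ S → D ∈ S → C.or D ∈ T → C ∈ T ∨ D ∈ T
  bot_notMem : PF.bot ∉ T

section Lindenbaum

variable {Rule : List PF → PF → Prop} {E : Set PF → PF → Prop} {S T U : Set PF} {B : PF}

theorem isEntailment_deriv (Rule : List PF → PF → Prop) : IsEntailment Rule (Deriv True Rule) where
  of_deriv := id
  cut _ hC hB := hB.cut <| by
    rintro X (rfl | hX)
    · exact hC
    · exact .hyp hX
  or_elim _ hC hD := .orE (.hyp (Set.mem_insert _ _))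
    (hC.mono (Set.insert_subset_insert (Set.subset_insert _ _)))
    (hD.mono (Set.insert_subset_insert (Set.subset_insert _ _)))

theorem isEntailment_relDeriv (Rule : List PF → PF → Prop) (T : Set PF) :
    IsEntailment Rule (RelDeriv True Rule T) where
  of_deriv := .of_deriv
  cut := .cut
  or_elim := .or_elim

theorem IsPrimeTheory.of_isEntailment (hE : IsEntailment Rule E) (hT : IsPrimeTheory E S T) :
    IsPrimeTheory (Deriv True Rule) S T :=
  { hT with mem_of_entails := fun hC h => hT.mem_of_entails hC (hE.of_deriv h) }

theorem isPrimeTheory_of_maximal (hE : IsEntailment Rule E) (hS : S.Finite) (hTS : T ⊆ S)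
    (hTB : ¬ E T B) (hmax : ∀ C ∈ S, C ∉ T → E (insert C T) B) : IsPrimeTheory E S T where
  subset := hTS
  mem_of_entails {C} hC hTC := by
    by_contra hCT
    exact hTB (hE.cut (hS.subset hTS) hTC (hmax C hC hCT))
  mem_or_mem {C D} hC hD hCD := by
    by_contra! ⟨hCT, hDT⟩
    have hB := hE.or_elim (hS.subset hTS) (hmax C hC hCT) (hmax D hD hDT)
    rw [Set.insert_eq_of_mem hCD] at hB
    exact hTB hB
  bot_notMem h := hTB (hE.of_deriv (.exfalso trivial (.hyp h)))

theorem IsEntailment.exists_isPrimeTheory (hE : IsEntailment Rule E) (hS : S.Finite) (hUS : U ⊆ S)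
    (hUB : ¬ E U B) : ∃ T, U ⊆ T ∧ IsPrimeTheory E S T ∧ B ∉ T := by
  have hfin : {T | U ⊆ T ∧ T ⊆ S ∧ ¬ E T B}.Finite := hS.finite_subsets.subset fun T hT => hT.2.1
  obtain ⟨T, hT⟩ := hfin.exists_maximal ⟨U, subset_rfl, hUS, hUB⟩
  obtain ⟨hUT, hTS, hTB⟩ := hT.prop
  refine ⟨T, hUT, isPrimeTheory_of_maximal hE hS hTS hTB fun C hC hCT => ?_,
    fun h => hTB (hE.of_deriv (.hyp h))⟩
  by_contra hCB
  exact hCT (hT.le_of_ge ⟨hUT.trans (Set.subset_insert _ _), Set.insert_subset hC hTS, hCB⟩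
    (Set.subset_insert _ _) (Set.mem_insert _ _))

end Lindenbaum

/-- The set of subformulas of a formula, including the formula itself. -/
def PF.subformulas : PF → Set PF
  | atom n => {atom n}
  | bot => {bot}
  | and A B => insert (and A B) (subformulas A ∪ subformulas B)
  | or A B => insert (or A B) (subformulas A ∪ subformulas B)
  | imp A B => insert (imp A B) (subformulas A ∪ subformulas B)

/-- `S` contains the immediate subformulas of its elements. -/
structure SubformulaClosed (S : Set PF) : Prop where
  and : ∀ {A B : PF}, A.and B ∈ S → A ∈ S ∧ B ∈ S
  or : ∀ {A B : PF}, A.or B ∈ S → A ∈ S ∧ B ∈ S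
  imp : ∀ {A B : PF}, A.imp B ∈ S → A ∈ S ∧ B ∈ S

theorem PF.finite_subformulas : ∀ A : PF, A.subformulas.Finite
  | atom _ | bot => Set.finite_singleton _
  | and A B | or A B | imp A B => ((finite_subformulas A).union (finite_subformulas B)).insert _

theorem PF.mem_subformulas_self (A : PF) : A ∈ A.subformulas := by
  cases A <;> simp [subformulas]

namespace SubformulaClosed

theorem biUnion {ι : Type*} {I : Set ι} {S : ι → Set PF} (hS : ∀ i ∈ I, SubformulaClosed (S i)) :
    SubformulaClosed (⋃ i ∈ I, S i) := by
  constructor <;> intro A B h <;> obtain ⟨i, hi, h⟩ := Set.mem_iUnion₂.1 h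
  · exact ((hS i hi).and h).imp (Set.mem_biUnion hi) (Set.mem_biUnion hi)
  · exact ((hS i hi).or h).imp (Set.mem_biUnion hi) (Set.mem_biUnion hi)
  · exact ((hS i hi).imp h).imp (Set.mem_biUnion hi) (Set.mem_biUnion hi)

theorem subformulas (A : PF) : SubformulaClosed A.subformulas := by
  have mem_self := PF.mem_subformulas_self
  induction A with
  | atom n | bot => constructor <;> simp [PF.subformulas]
  | and A B ihA ihB | or A B ihA ihB | imp A B ihA ihB =>
    obtain ⟨andA, orA, impA⟩ := ihA
    obtain ⟨andB, orB, impB⟩ := ihB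
    constructor <;> intro C D h <;>
      simp only [PF.subformulas, Set.mem_insert_iff, Set.mem_union] at h ⊢ <;> grind

end SubformulaClosed

/-- The worlds of the canonical model over `S`. -/
abbrev CanonicalWorld (S : Set PF) : Type := {T : Set PF // IsPrimeTheory FPL S T}

namespace CanonicalWorld

variable {S : Set PF} {A B : PF}

/-- Accessibility in the canonical model. Strictness of the inclusion makes the relation
irreflexive. -/
def Rel (T U : CanonicalWorld S) : Prop :=
  T.1 ⊂ U.1 ∧ ∀ C D, C.imp D ∈ T.1 → C ∈ U.1 → D ∈ U.1

/-- The canonical valuation. -/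
def val (n : ℕ) (T : CanonicalWorld S) : Prop := PF.atom n ∈ T.1

theorem persistent_val : Persistent Rel (val (S := S)) :=
  fun _ _ _ hTU h => hTU.1.subset h

theorem isGLFrame_rel (hS : S.Finite) : IsGLFrame (Rel (S := S)) where
  trans hTU hUV :=
    ⟨hTU.1.trans hUV.1, fun C D hCD hC => hUV.2 C D (hTU.1.subset hCD) hC⟩
  wellFounded_flip := by
    have : Finite (CanonicalWorld S) :=
      (hS.finite_subsets.subset fun _ hT => IsPrimeTheory.subset hT).to_subtype
    exact Subrelation.wf (r := (· > ·)) And.left wellFounded_gt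

theorem not_relDeriv_of_imp_notMem (T : CanonicalWorld S) (hAB : A.imp B ∈ S)
    (h : A.imp B ∉ T.1) : ¬ RelDeriv True RuleL T.1 (insert A (insert (A.imp B) T.1)) B := by
  rintro ⟨P, hP, hPB⟩
  have and_self : FPL (insert (A.and (A.imp B)) T.1) (A.and (A.imp B)) :=
    .hyp (Set.mem_insert _ _)
  have deriv_P : FPL (insert (A.and (A.imp B)) T.1) P := hP.cut <| by
    rintro X (rfl | rfl | hX)
    · exact .andE1 and_self
    · exact .andE2 and_self
    · exact .hyp (Set.mem_insert_of_mem _ hX)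
  have loeb_premise : FPL T.1 ((A.and (A.imp B)).imp B) := .fTr (.impI deriv_P) hPB
  exact h (T.2.mem_of_entails hAB
    (.extra ⟨A, B, rfl, rfl⟩ fun p hp => List.mem_singleton.1 hp ▸ loeb_premise))

-- Putting `A → B` itself into the successor is what makes the inclusion strict.
theorem exists_rel_of_imp_notMem (hS : S.Finite) (hSub : SubformulaClosed S)
    (T : CanonicalWorld S) (hAB : A.imp B ∈ S) (h : A.imp B ∉ T.1) :
    ∃ U, T.Rel U ∧ A ∈ U.1 ∧ B ∉ U.1 := by
  have hE := isEntailment_relDeriv RuleL T.1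
  obtain ⟨U, hTU, hU, hBU⟩ := hE.exists_isPrimeTheory hS
    (Set.insert_subset (hSub.imp hAB).1 (Set.insert_subset hAB T.2.subset))
    (T.not_relDeriv_of_imp_notMem hAB h)
  obtain ⟨hA, hABU, hTU⟩ : A ∈ U ∧ A.imp B ∈ U ∧ T.1 ⊆ U := by
    simpa only [Set.insert_subset_iff] using hTU
  refine ⟨⟨U, hU.of_isEntailment hE⟩, ⟨⟨hTU, fun hUT => h (hUT hABU)⟩, fun C D hCD hC => ?_⟩,
    hA, hBU⟩
  exact hU.mem_of_entails (hSub.imp (T.2.subset hCD)).2 ⟨C, .hyp hC, .hyp hCD⟩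

theorem mForces_iff_mem (hS : S.Finite) (hSub : SubformulaClosed S) (hA : A ∈ S)
    (T : CanonicalWorld S) : MForces Rel val (fun _ => False) T A ↔ A ∈ T.1 := by
  induction A generalizing T with
  | atom n => exact Iff.rfl
  | bot => exact iff_of_false id T.2.bot_notMem
  | and A B ihA ihB =>
    obtain ⟨hAS, hBS⟩ := hSub.and hA
    refine (and_congr (ihA hAS T) (ihB hBS T)).trans ⟨fun h => ?_, fun h => ?_⟩
    · exact T.2.mem_of_entails hA (.andI (.hyp h.1) (.hyp h.2))
    · exact ⟨T.2.mem_of_entails hAS (.andE1 (.hyp h)), T.2.mem_of_entails hBS (.andE2 (.hyp h))⟩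
  | or A B ihA ihB =>
    obtain ⟨hAS, hBS⟩ := hSub.or hA
    refine (or_congr (ihA hAS T) (ihB hBS T)).trans ⟨?_, T.2.mem_or_mem hAS hBS⟩
    rintro (h | h)
    · exact T.2.mem_of_entails hA (.orI1 (.hyp h))
    · exact T.2.mem_of_entails hA (.orI2 (.hyp h))
  | imp A B ihA ihB =>
    obtain ⟨hAS, hBS⟩ := hSub.imp hA
    refine ⟨fun h => ?_, fun h U hTU hAU => ?_⟩
    · by_contra hAB
      obtain ⟨U, hTU, hAU, hBU⟩ := exists_rel_of_imp_notMem hS hSub T hA hAB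
      exact hBU ((ihB hBS U).1 (h U hTU ((ihA hAS U).2 hAU)))
    · exact (ihB hBS U).2 (hTU.2 A B h ((ihA hAS U).1 hAU))

end CanonicalWorld

theorem FPL.modalConseq_bhk {Γ : Set PF} {A : PF} (h : FPL Γ A) :
    ModalConseq AxGL (bhk '' Γ) (bhk A) :=
  Deriv.modalConseq_bhk Prv.four_of_loeb ModalConseq.bhk_of_ruleL h

theorem FPL.exists_countermodel {Γ : Set PF} (hΓ : Γ.Finite) {A : PF} (hA : ¬ FPL Γ A) :
    ∃ (W : Type) (R : W → W → Prop) (V : ℕ → W → Prop), IsGLFrame R ∧ Persistent R V ∧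
      ∃ w, (∀ B ∈ Γ, MForces R V (fun _ => False) w B) ∧ ¬ MForces R V (fun _ => False) w A := by
  let S : Set PF := ⋃ B ∈ insert A Γ, B.subformulas
  have hS : S.Finite := (hΓ.insert A).biUnion fun B _ => B.finite_subformulas
  have hSub : SubformulaClosed S := .biUnion fun B _ => .subformulas B
  have hAΓS : insert A Γ ⊆ S := fun B hB => Set.mem_biUnion hB B.mem_subformulas_self
  obtain ⟨hAS, hΓS⟩ := Set.insert_subset_iff.1 hAΓS
  obtain ⟨T, hΓT, hT, hAT⟩ := (isEntailment_deriv RuleL).exists_isPrimeTheory hS hΓS hA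
  have truth {B : PF} (hB : B ∈ S) := CanonicalWorld.mForces_iff_mem hS hSub hB ⟨T, hT⟩
  exact ⟨CanonicalWorld S, CanonicalWorld.Rel, CanonicalWorld.val,
    CanonicalWorld.isGLFrame_rel hS, CanonicalWorld.persistent_val, ⟨T, hT⟩,
    fun B hB => (truth (hΓS hB)).2 (hΓT hB), fun h => hAT ((truth hAS).1 h)⟩

theorem stmt6 (Γ : Set PF) (A : PF) :
    FPL Γ A ↔ ModalConseq AxGL (bhk '' Γ) (bhk A) := by
  refine ⟨FPL.modalConseq_bhk, fun h => ?_⟩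
  obtain ⟨Δ, hΔΓ, hΔ, h⟩ := h.exists_finite_of_image
  suffices FPL Δ A from this.mono hΔΓ
  by_contra hA
  obtain ⟨W, R, V, hR, hV, w, hwΔ, hwA⟩ := FPL.exists_countermodel hΔ hA
  refine hwA ((forces_bhk_iff_mForces hV A w).1 (h.forces hR.shadowRel ?_))
  exact Set.forall_mem_image.2 fun B hB => (forces_bhk_iff_mForces hV B w).2 (hwΔ B hB)
end

section
/- Let (K, ≤, V) be an MPC-Kripke model. Define an S4 Kripke model on the same frame (K, ≤) with valuation V'(p) = V(p) for every atom p of the propositional language and V'(q) = V(⊥) for the fresh atom q. Then for every propositional formula B and every node l ∈ K: l ⊩ B in the MPC-Kripke model if and only if l ⊨ B^w in the S4 Kripke model. Consequently, any MPC-Kripke countermodel to Γ ⇒ A yields an S4 Kripke countermodel to Γ^w ⇒ A^w. -/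
section WeakTranslation

variable {W : Type} {R : W → W → Prop} [Std.Refl R]

theorem forces_box_iff_of_persistent {V : ℕ → W → Prop} {A : MF}
    (hA : ∀ x y, R x y → Forces R V x A → Forces R V y A) (w : W) :
    Forces R V w A.box ↔ Forces R V w A :=
  ⟨fun h => h w (refl w), fun h u hwu => hA w u hwu h⟩

/-- The translation boxes an implication, whose two forcing clauses then coincide, and the atoms
and `⊥`, on which the box is vacuous by reflexivity and persistence. -/
theorem mforces_iff_forces_wtr {V : ℕ → W → Prop} {Vbot : W → Prop}
    (hV : ∀ n x y, R x y → V n x → V n y) (hVbot : ∀ x y, R x y → Vbot x → Vbot y)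
    (B : PF) (w : W) :
    MForces R V Vbot w B ↔ Forces R (shiftVal V Vbot) w (wtr B) := by
  induction B generalizing w with
  | atom n =>
    exact (forces_box_iff_of_persistent (V := shiftVal V Vbot) (A := .atom (n + 1)) (hV n) w).symm
  | bot =>
    exact (forces_box_iff_of_persistent (V := shiftVal V Vbot) (A := .atom 0) hVbot w).symm
  | and A B ihA ihB => exact and_congr (ihA w) (ihB w)
  | or A B ihA ihB => exact or_congr (ihA w) (ihB w)
  | imp A B ihA ihB => exact forall₂_congr fun u _ => imp_congr (ihA u) (ihB u)

end WeakTranslation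

theorem stmt13_general {W : Type} (R : W → W → Prop) [Std.Refl R]
    (V : ℕ → W → Prop) (Vbot : W → Prop)
    (hV : ∀ n x y, R x y → V n x → V n y)
    (hVbot : ∀ x y, R x y → Vbot x → Vbot y) :
    (∀ (B : PF) (l : W),
        MForces R V Vbot l B ↔ Forces R (shiftVal V Vbot) l (wtr B)) ∧
    (∀ (Γ : Set PF) (A : PF) (l : W),
        (∀ C ∈ Γ, MForces R V Vbot l C) → ¬ MForces R V Vbot l A →
        (∀ C ∈ Γ, Forces R (shiftVal V Vbot) l (wtr C)) ∧
        ¬ Forces R (shiftVal V Vbot) l (wtr A)) := by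
  have truth := mforces_iff_forces_wtr hV hVbot
  refine ⟨truth, fun Γ A l hΓ hA => ⟨fun C hC => ?_, ?_⟩⟩
  · exact (truth C l).mp (hΓ C hC)
  · exact mt (truth A l).mpr hA

-- STATEMENT 13
theorem stmt13 {W : Type} (le : W → W → Prop)
    (hrefl : Reflexive le) (htrans : Transitive le)
    (V : ℕ → W → Prop) (Vbot : W → Prop)
    (hupV : ∀ n x y, le x y → V n x → V n y)
    (hupB : ∀ x y, le x y → Vbot x → Vbot y) :
    (∀ (B : PF) (l : W),
        MForces le V Vbot l B ↔ Forces le (shiftVal V Vbot) l (wtr B)) ∧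
    (∀ (Γ : Set PF) (A : PF) (l : W),
        (∀ C ∈ Γ, MForces le V Vbot l C) → ¬ MForces le V Vbot l A →
        (∀ C ∈ Γ, Forces le (shiftVal V Vbot) l (wtr C)) ∧
        ¬ Forces le (shiftVal V Vbot) l (wtr A)) := by
  have : Std.Refl le := ⟨hrefl⟩
  exact stmt13_general le V Vbot hupV hupB
end
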